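/- In the ring R_d, every homogeneous element of top degree d(d-1)/2 is a rational multiple of u_1^{d(d-1)/2}. -/

import Mathlib

/-!
Put `n = d - 1` and `N = n(n+1)/2`. The top degree component of `R_d` is spanned by the class of
`u_1 ⋯ u_n` (`lag_top_mem`): the relation in degree `2k` expresses `u_k²` through products
`u_a u_b` with `a + b = 2k`, `a ≠ b`, and iterating this rewrites every monomial in terms of
squarefree ones, of which there is only one in degree `N`. It remains to see that `u_1^N` is not
in the ideal.

For this, specialize `u_k` to the elementary symmetric polynomial `e_k(x_1,…,x_n)`. The relation
`F = 0` becomes `∏ (1 - x_i²) = 1`. With `ρ = (1, 3, …, 2n-1)`, consider the linear form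
`f ↦ [x^ρ] (f(e) ∏_{i<j} (x_j - x_i))`.

* It kills the ideal (`coeff_eq_zero_of_mem`), because lowering a nonempty set of entries of `ρ`
  by `2` creates either a negative or a repeated exponent, and the polynomial `f(e) ∏ (x_j - x_i)`
  is alternating.
* On `u_1^N`, which maps to `(x_1 + ⋯ + x_n)^N`, its value is `N! det (1/(ρ_i - j)!)`
  (with `0 ≤ j < n`), by the multinomial theorem. This determinant is a nonzero multiple of the
  Vandermonde determinant of the distinct numbers `ρ_i` (`coeff_pow_ne_zero`).
-/

open scoped BigOperators

/-- Grading weight: variable `i : Fin d` represents `u_{i+1}` of degree `i+1`. -/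
def lagWeight (d : ℕ) : Fin d → ℕ := fun i => (i : ℕ) + 1

/-- `F = (1 + ∑_{j=1}^{d-1} u_j)(1 + ∑_{j=1}^{d-1} (-1)^j u_j) - 1` in `ℚ[u_1,…,u_d]`. -/
noncomputable def lagF (d : ℕ) : MvPolynomial (Fin d) ℚ :=
  (1 + ∑ i : Fin d, if (i : ℕ) + 1 ≤ d - 1 then MvPolynomial.X i else 0) *
    (1 + ∑ i : Fin d, if (i : ℕ) + 1 ≤ d - 1 then
      (-1) ^ ((i : ℕ) + 1) * MvPolynomial.X i else 0) - 1

/-- The ideal generated by `u_d` and the positive-degree weighted-homogeneous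
components of `F`, defining `R_d = ℚ[u_1,…,u_d]/(F = 0, u_d = 0)`. -/
noncomputable def lagIdeal (d : ℕ) : Ideal (MvPolynomial (Fin d) ℚ) :=
  Ideal.span
    ({p | ∃ n, 1 ≤ n ∧
        p = MvPolynomial.weightedHomogeneousComponent (lagWeight d) n (lagF d)} ∪
      {p | ∃ i : Fin d, (i : ℕ) = d - 1 ∧ p = MvPolynomial.X i})

open MvPolynomial

/-! ### Squarefree monomials span -/

/-- The generator `u_k` of `ℚ[u_1,…,u_{n+1}]`, with the conventions `u_0 = 1` and `u_k = 0` for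
`k > n`, so that the defining relations become `∑_{a+b=w} (-1)^b u_a u_b = 0`. -/
noncomputable def lagU (n k : ℕ) : MvPolynomial (Fin (n + 1)) ℚ :=
  if k = 0 then 1 else if h : k ≤ n then X ⟨k - 1, by omega⟩ else 0

/-- The quadratic weight `∑ s_i (i+1)²` of an exponent; rewriting `u_k²` by means of the
relations strictly increases it. -/
noncomputable def lagSq (n : ℕ) : (Fin (n + 1) →₀ ℕ) →+ ℕ :=
  Finsupp.weight (fun i : Fin (n + 1) => ((i : ℕ) + 1) ^ 2)

lemma lagU_cases (n k : ℕ) : lagU n k = 0 ∨ ∃ r : Fin (n + 1) →₀ ℕ,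
    lagU n k = monomial r 1 ∧ Finsupp.weight (lagWeight (n + 1)) r = k ∧ lagSq n r = k ^ 2 := by
  unfold lagU
  split_ifs with h1 h2
  · right
    exact ⟨0, by simp, by simp [h1], by simp [h1]⟩
  · right
    refine ⟨Finsupp.single ⟨k - 1, by omega⟩ 1, rfl, ?_, ?_⟩
    · simp [lagWeight, Finsupp.weight_single]; omega
    · have : k - 1 + 1 = k := by omega
      simp [lagSq, Finsupp.weight_single, this]
  · left; rfl

lemma lagU_homogeneous (n k : ℕ) : (lagU n k).IsWeightedHomogeneous (lagWeight (n + 1)) k := by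
  rcases lagU_cases n k with h | ⟨r, h, hr, -⟩
  · rw [h]; exact isWeightedHomogeneous_zero ..
  · rw [h]; exact isWeightedHomogeneous_monomial _ _ _ hr

lemma lagU_sum (n : ℕ) (c : MvPolynomial (Fin (n + 1)) ℚ) :
    (1 + ∑ i : Fin (n + 1), if (i : ℕ) + 1 ≤ n + 1 - 1 then c ^ ((i : ℕ) + 1) * X i else 0) =
      ∑ k ∈ Finset.range (n + 1), c ^ k * lagU n k := by
  rw [Finset.sum_range_succ', Fin.sum_univ_castSucc, add_comm (1 : MvPolynomial _ ℚ),
    Finset.sum_range]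
  congr 1
  · simp only [Fin.val_last, Fin.val_castSucc]
    rw [if_neg (by omega), add_zero]
    refine Finset.sum_congr rfl fun i _ => ?_
    have hi := i.isLt
    rw [if_pos (by omega), lagU, if_neg (by omega), dif_pos (by omega)]
    rfl
  · simp [lagU]

lemma lagF_eq (n : ℕ) : lagF (n + 1) =
    ∑ p ∈ Finset.range (n + 1) ×ˢ Finset.range (n + 1),
      (-1) ^ p.2 * (lagU n p.1 * lagU n p.2) - 1 := by
  have h1 := lagU_sum n 1
  have h2 := lagU_sum n (-1)
  simp only [one_pow, one_mul] at h1
  rw [lagF, h1, h2, Finset.sum_mul_sum, Finset.sum_product]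
  congr 1
  refine Finset.sum_congr rfl fun a _ => Finset.sum_congr rfl fun b _ => ?_
  ring

lemma lagRel_mem (n w : ℕ) (hw : 1 ≤ w) :
    ∑ p ∈ Finset.range (n + 1) ×ˢ Finset.range (n + 1),
      (if p.1 + p.2 = w then (-1) ^ p.2 * (lagU n p.1 * lagU n p.2) else 0) ∈
        lagIdeal (n + 1) := by
  refine Ideal.subset_span (Or.inl ⟨w, hw, ?_⟩)
  rw [lagF_eq, map_sub, map_sum,
    (isWeightedHomogeneous_one ℚ (lagWeight (n + 1))).weightedHomogeneousComponent_ne w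
      (by omega), sub_zero]
  refine Finset.sum_congr rfl fun p _ => ?_
  have hp : ((-1) ^ p.2 * (lagU n p.1 * lagU n p.2)).IsWeightedHomogeneous
      (lagWeight (n + 1)) (p.1 + p.2) := by
    have := ((lagU_homogeneous n p.1).mul (lagU_homogeneous n p.2)).C_mul ((-1) ^ p.2)
    simpa using this
  split_ifs with h
  · rw [← h, hp.weightedHomogeneousComponent_same]
  · rw [hp.weightedHomogeneousComponent_ne w (by omega)]

/-- The exponent of `u_1 u_2 ⋯ u_n`. -/
noncomputable def lagTop (n : ℕ) : Fin (n + 1) →₀ ℕ :=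
  Finsupp.equivFunOnFinite.symm fun i => if (i : ℕ) = n then 0 else 1

lemma lag_weight_eq (n : ℕ) (s : Fin (n + 1) →₀ ℕ) :
    Finsupp.weight (lagWeight (n + 1)) s = ∑ i, s i * ((i : ℕ) + 1) := by
  simp [Finsupp.weight_eq_sum, lagWeight]

lemma lagSq_le (n : ℕ) (s : Fin (n + 1) →₀ ℕ) :
    lagSq n s ≤ (n + 1) * Finsupp.weight (lagWeight (n + 1)) s := by
  rw [lag_weight_eq, Finset.mul_sum, lagSq, Finsupp.weight_eq_sum]
  refine Finset.sum_le_sum fun i _ => ?_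
  have : (i : ℕ) + 1 ≤ n + 1 := i.isLt
  calc s i * ((i : ℕ) + 1) ^ 2 = ((i : ℕ) + 1) * (s i * ((i : ℕ) + 1)) := by ring
    _ ≤ _ := Nat.mul_le_mul_right _ this

lemma lagTop_weight (n : ℕ) :
    Finsupp.weight (lagWeight (n + 1)) (lagTop n) = (n + 1) * n / 2 := by
  rw [lag_weight_eq, Fin.sum_univ_castSucc]
  have h : ∀ i : Fin n, lagTop n i.castSucc * ((i.castSucc : ℕ) + 1) = (i : ℕ) + 1 := by
    intro i
    have : (i : ℕ) ≠ n := i.isLt.ne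
    simp [lagTop, this]
  rw [Finset.sum_congr rfl fun i _ => h i]
  have h2 := Finset.sum_range_id (n + 1)
  rw [Finset.sum_range_succ', Finset.sum_range] at h2
  simpa [lagTop] using h2

lemma lag_squarefree_eq (n : ℕ) (s : Fin (n + 1) →₀ ℕ) (h1 : ∀ i, s i ≤ 1)
    (h0 : s (Fin.last n) = 0)
    (hs : Finsupp.weight (lagWeight (n + 1)) s = (n + 1) * n / 2) : s = lagTop n := by
  have hle : ∀ i ∈ (Finset.univ : Finset (Fin (n + 1))),
      s i * ((i : ℕ) + 1) ≤ lagTop n i * ((i : ℕ) + 1) := by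
    intro i _
    refine Nat.mul_le_mul_right _ ?_
    by_cases hi : (i : ℕ) = n
    · have : i = Fin.last n := Fin.ext hi
      rw [this, h0]; exact Nat.zero_le _
    · simpa [lagTop, hi] using h1 i
  rw [← lagTop_weight, lag_weight_eq, lag_weight_eq] at hs
  ext i
  have := (Finset.sum_eq_sum_iff_of_le hle).1 hs i (Finset.mem_univ _)
  exact Nat.eq_of_mul_eq_mul_right (Nat.succ_pos _) this

/-- Modulo the ideal, every monomial of top degree is a multiple of `u_1 ⋯ u_n`. A square `u_k²`
is replaced by `± u_a u_b` with `a + b = 2k`, `a ≠ b`; this preserves the degree and increases the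
bounded quantity `lagSq`, so it terminates. -/
lemma lag_monomial_mem (n : ℕ) : ∀ (e : ℕ) (s : Fin (n + 1) →₀ ℕ),
    Finsupp.weight (lagWeight (n + 1)) s = (n + 1) * n / 2 →
    (n + 1) * ((n + 1) * n / 2) - lagSq n s = e →
    (monomial s (1 : ℚ)) ∈
      (lagIdeal (n + 1)).restrictScalars ℚ ⊔ Submodule.span ℚ {monomial (lagTop n) (1 : ℚ)} := by
  intro e
  induction e using Nat.strong_induction_on with
  | _ e ih =>
  intro s hs he
  by_cases hlast : s (Fin.last n) = 0
  swap
  · refine Submodule.mem_sup_left ?_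
    have hsplit : s = (s - Finsupp.single (Fin.last n) 1) + Finsupp.single (Fin.last n) 1 := by
      rw [tsub_add_cancel_of_le]
      simpa [Nat.one_le_iff_ne_zero] using hlast
    have hX : (X (Fin.last n) : MvPolynomial (Fin (n + 1)) ℚ) ∈ lagIdeal (n + 1) :=
      Ideal.subset_span (Or.inr ⟨Fin.last n, by simp, rfl⟩)
    have := Ideal.mul_mem_left _ (monomial (s - Finsupp.single (Fin.last n) 1) (1 : ℚ)) hX
    rw [X, monomial_mul, ← hsplit, one_mul] at this
    exact this
  by_cases hsf : ∀ i, s i ≤ 1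
  · rw [lag_squarefree_eq n s hsf hlast hs]
    exact Submodule.mem_sup_right (Submodule.mem_span_singleton_self _)
  push Not at hsf
  obtain ⟨i, hi⟩ := hsf
  have hin : (i : ℕ) < n := by
    rcases Nat.lt_or_ge (i : ℕ) n with h | h
    · exact h
    · have h' := i.isLt
      have : i = Fin.last n := Fin.ext (by simp; omega)
      rw [this] at hi; omega
  set k := (i : ℕ) + 1 with hk
  set t := s - Finsupp.single i 2 with ht
  have hsplit : s = Finsupp.single i 2 + t := by
    rw [ht, add_tsub_cancel_of_le]
    rw [Finsupp.single_le_iff]; omega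
  have hUk : lagU n k * lagU n k * monomial t 1 = monomial s 1 := by
    have : lagU n k = X i := by
      rw [lagU, if_neg (by omega), dif_pos (by omega)]
      congr 1
    rw [this, ← pow_two, X_pow_eq_monomial, monomial_mul, ← hsplit, one_mul]
  have hws : Finsupp.weight (lagWeight (n + 1)) s =
      2 * k + Finsupp.weight (lagWeight (n + 1)) t := by
    rw [hsplit, map_add, Finsupp.weight_single]
    simp [lagWeight, hk]
  have hqs : lagSq n s = 2 * k ^ 2 + lagSq n t := by
    rw [hsplit, map_add, lagSq, Finsupp.weight_single]
    simp [hk]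
  have hrel := Ideal.mul_mem_right (monomial t (1 : ℚ)) _ (lagRel_mem n (2 * k) (by omega))
  have hkk : (k, k) ∈ Finset.range (n + 1) ×ˢ Finset.range (n + 1) := by
    simp; omega
  rw [← Finset.add_sum_erase _ _ hkk, if_pos (by dsimp only; omega), add_mul,
    Finset.sum_mul, mul_assoc, hUk] at hrel
  set M := (lagIdeal (n + 1)).restrictScalars ℚ ⊔
    Submodule.span ℚ {monomial (lagTop n) (1 : ℚ)} with hM
  have hsgn : ∀ (j : ℕ) (f : MvPolynomial (Fin (n + 1)) ℚ), f ∈ M → (-1) ^ j * f ∈ M := by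
    intro j f hf
    have := M.smul_mem ((-1) ^ j) hf
    rwa [smul_eq_C_mul, map_pow, map_neg, map_one] at this
  have hrest : ∑ p ∈ (Finset.range (n + 1) ×ˢ Finset.range (n + 1)).erase (k, k),
      (if p.1 + p.2 = 2 * k then (-1) ^ p.2 * (lagU n p.1 * lagU n p.2) else 0) *
        monomial t (1 : ℚ) ∈ M := by
    refine Submodule.sum_mem _ fun p hp => ?_
    obtain ⟨a, b⟩ := p
    have hne : (a, b) ≠ (k, k) := (Finset.mem_erase.1 hp).1
    dsimp only
    split_ifs with hab
    swap
    · rw [zero_mul]; exact M.zero_mem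
    rw [mul_assoc]
    refine hsgn _ _ ?_
    rcases lagU_cases n a with ha | ⟨ra, ha, hra, hra'⟩
    · rw [ha, zero_mul, zero_mul]; exact M.zero_mem
    rcases lagU_cases n b with hb | ⟨rb, hb, hrb, hrb'⟩
    · rw [hb, mul_zero, zero_mul]; exact M.zero_mem
    rw [ha, hb, monomial_mul, monomial_mul, one_mul, one_mul]
    have hw' : Finsupp.weight (lagWeight (n + 1)) (ra + rb + t) = (n + 1) * n / 2 := by
      rw [map_add, map_add, hra, hrb, hab, ← hws, hs]
    have hlt : 2 * k ^ 2 < a ^ 2 + b ^ 2 := by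
      have hak : a ≠ k := by
        intro h
        exact hne (Prod.ext h (by dsimp only; omega))
      zify at hab hak ⊢
      have hb' : (b : ℤ) = 2 * k - a := by linarith
      have : 0 < ((a : ℤ) - k) ^ 2 := by
        have : (a : ℤ) - k ≠ 0 := sub_ne_zero.2 (by exact_mod_cast hak)
        positivity
      rw [hb']; nlinarith
    have hq' : lagSq n (ra + rb + t) = a ^ 2 + b ^ 2 + lagSq n t := by
      rw [map_add, map_add, hra', hrb']
    have hbd := lagSq_le n (ra + rb + t)
    rw [hw'] at hbd
    exact ih _ (by omega) _ hw' rfl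
  have hfin : (-1) ^ k * monomial s (1 : ℚ) ∈ M := by
    have h := M.sub_mem (Submodule.mem_sup_left (show _ ∈ (lagIdeal (n + 1)).restrictScalars ℚ
      from hrel)) hrest
    simpa using h
  have h := hsgn k _ hfin
  rwa [← mul_assoc, ← mul_pow, neg_one_mul, neg_neg, one_pow, one_mul] at h

lemma lag_top_mem (n : ℕ) (P : MvPolynomial (Fin (n + 1)) ℚ)
    (hP : P.IsWeightedHomogeneous (lagWeight (n + 1)) ((n + 1) * n / 2)) :
    ∃ c : ℚ, P - c • monomial (lagTop n) (1 : ℚ) ∈ lagIdeal (n + 1) := by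
  have hmem : P ∈ (lagIdeal (n + 1)).restrictScalars ℚ ⊔
      Submodule.span ℚ {monomial (lagTop n) (1 : ℚ)} := by
    rw [P.as_sum]
    refine Submodule.sum_mem _ fun s hs => ?_
    have := Submodule.smul_mem _ (coeff s P)
      (lag_monomial_mem n _ s (hP (mem_support_iff.1 hs)) rfl)
    rwa [smul_monomial, smul_eq_mul, mul_one] at this
  obtain ⟨f, hf, g, hg, hfg⟩ := Submodule.mem_sup.1 hmem
  obtain ⟨c, rfl⟩ := Submodule.mem_span_singleton.1 hg
  exact ⟨c, by rw [← hfg, add_sub_cancel_right]; exact hf⟩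

/-! ### The power of `u_1` is nonzero -/

/-- The specialization `u_k ↦ e_k(x_1,…,x_n)` to elementary symmetric polynomials. -/
noncomputable def lagEval (n : ℕ) : MvPolynomial (Fin (n + 1)) ℚ →ₐ[ℚ] MvPolynomial (Fin n) ℚ :=
  aeval fun i => esymm (Fin n) ℚ ((i : ℕ) + 1)

/-- The Vandermonde product, as a determinant. -/
noncomputable def lagVdm (n : ℕ) : MvPolynomial (Fin n) ℚ :=
  (Matrix.vandermonde (X : Fin n → MvPolynomial (Fin n) ℚ)).det

/-- The exponent `ρ = (1, 3, …, 2n-1)`, so that `x^ρ` is the diagonal term of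
`∏ x_i ∏_{i<j} (x_j² - x_i²)`. -/
noncomputable def lagRho (n : ℕ) : Fin n →₀ ℕ :=
  Finsupp.equivFunOnFinite.symm fun i => 2 * (i : ℕ) + 1

lemma rename_lagVdm (n : ℕ) {i j : Fin n} (h : i ≠ j) :
    rename (Equiv.swap i j) (lagVdm n) = - lagVdm n := by
  rw [lagVdm, AlgHom.map_det]
  have : (rename (R := ℚ) (Equiv.swap i j)).mapMatrix
      (Matrix.vandermonde (X : Fin n → MvPolynomial (Fin n) ℚ)) =
      (Matrix.vandermonde (X : Fin n → MvPolynomial (Fin n) ℚ)).submatrix (Equiv.swap i j) id := by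
    ext1 a b
    simp [Matrix.vandermonde_apply]
  rw [this, Matrix.det_permute, Equiv.Perm.sign_swap h]
  simp

lemma rename_lagEval (n : ℕ) (σ : Equiv.Perm (Fin n)) (f : MvPolynomial (Fin (n + 1)) ℚ) :
    rename σ (lagEval n f) = lagEval n f := by
  have : (rename σ).comp (lagEval n) = lagEval n := by
    ext1 i
    simp [lagEval, rename_esymm]
  exact DFunLike.congr_fun this f

lemma coeff_eq_zero_of_swap {n : ℕ} {i j : Fin n} (A : MvPolynomial (Fin n) ℚ)
    (hA : rename (Equiv.swap i j) A = -A) (m : Fin n →₀ ℕ) (hm : m i = m j) :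
    coeff m A = 0 := by
  have h := coeff_rename_mapDomain (Equiv.swap i j) (Equiv.injective _) A m
  have hmm : m.mapDomain (Equiv.swap i j) = m := by
    ext a
    rw [Finsupp.mapDomain_equiv_apply, Equiv.symm_swap, Equiv.swap_apply_def]
    split_ifs with h1 h2
    · rw [h1, hm]
    · rw [h2, hm]
    · rfl
  rw [hmm, hA, coeff_neg] at h
  linarith

/-- Subtracting `2` from `ρ` on a nonempty set of positions produces a negative or a repeated
exponent, and neither occurs in an alternating polynomial. -/
lemma coeff_lagRho_eq_zero {n : ℕ} (A : MvPolynomial (Fin n) ℚ)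
    (hA : ∀ i j, i ≠ j → rename (Equiv.swap i j) A = -A) (S : Finset (Fin n)) (hS : S.Nonempty) :
    coeff (lagRho n) ((∏ i ∈ S, X i ^ 2) * A) = 0 := by
  have hmon : (∏ i ∈ S, X i ^ 2 : MvPolynomial (Fin n) ℚ) =
      monomial (∑ i ∈ S, Finsupp.single i 2) 1 := by
    rw [monomial_sum_one]
    exact Finset.prod_congr rfl fun i _ => X_pow_eq_monomial ..
  have hval : ∀ j, (∑ i ∈ S, Finsupp.single i 2 : Fin n →₀ ℕ) j = if j ∈ S then 2 else 0 := by
    intro j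
    simp [Finsupp.finsetSum_apply, Finsupp.single_apply]
  rw [hmon, coeff_monomial_mul']
  split_ifs with hle
  swap
  · rfl
  rw [one_mul]
  set i := S.min' hS with hi
  have hiS : i ∈ S := S.min'_mem hS
  have hi0 : 0 < (i : ℕ) := by
    have := hle i
    rw [hval, if_pos hiS] at this
    simp [lagRho] at this
    omega
  have hilt := i.isLt
  set j : Fin n := ⟨(i : ℕ) - 1, by omega⟩ with hj
  have hji : j < i := by rw [Fin.lt_def, hj]; dsimp only; omega
  have hjS : j ∉ S := fun h => absurd (S.min'_le j h) (not_le.2 hji)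
  refine coeff_eq_zero_of_swap A (hA i j hji.ne') _ ?_
  rw [Finsupp.tsub_apply, Finsupp.tsub_apply, hval, hval, if_pos hiS, if_neg hjS]
  simp [lagRho, hj]
  omega

lemma lagEval_component (n k : ℕ) (p : MvPolynomial (Fin (n + 1)) ℚ) :
    lagEval n (weightedHomogeneousComponent (lagWeight (n + 1)) k p) =
      homogeneousComponent k (lagEval n p) := by
  have hmon : ∀ u a, (lagEval n (monomial u a)).IsHomogeneous
      (Finsupp.weight (lagWeight (n + 1)) u) := by
    intro u a
    rw [lagEval, aeval_monomial, Finsupp.prod_fintype _ _ (by simp), lag_weight_eq]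
    refine IsHomogeneous.C_mul (IsHomogeneous.prod _ _ _ fun i _ => ?_) a
    rw [mul_comm]
    refine IsHomogeneous.pow (IsHomogeneous.sum _ _ _ fun t ht => ?_) _
    rw [← (Finset.mem_powersetCard.1 ht).2, Finset.card_eq_sum_ones]
    exact IsHomogeneous.prod _ _ _ fun j _ => isHomogeneous_X ℚ j
  induction p using MvPolynomial.induction_on' with
  | monomial u a =>
    rw [homogeneousComponent_of_mem (hmon u a),
      weightedHomogeneousComponent_of_mem (isWeightedHomogeneous_monomial _ u a rfl)]
    split_ifs <;> simp
  | add p q hp hq => rw [map_add, map_add, hp, hq, map_add, map_add]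

lemma prod_one_add_esymm (n : ℕ) (c : MvPolynomial (Fin n) ℚ) :
    ∏ i : Fin n, (1 + c * X i) =
      1 + ∑ i : Fin (n + 1), if (i : ℕ) + 1 ≤ n + 1 - 1 then
        c ^ ((i : ℕ) + 1) * esymm (Fin n) ℚ ((i : ℕ) + 1) else 0 := by
  rw [Finset.prod_one_add, Finset.sum_powerset, Finset.card_univ, Fintype.card_fin,
    Finset.sum_range_succ', Fin.sum_univ_castSucc, add_comm, Finset.sum_range]
  congr 1
  · simp
  · simp only [Fin.val_last, Fin.val_castSucc]
    rw [if_neg (by omega), add_zero]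
    refine Finset.sum_congr rfl fun i _ => ?_
    have hi := i.isLt
    rw [if_pos (by omega), esymm, Finset.mul_sum]
    refine Finset.sum_congr rfl fun t ht => ?_
    rw [Finset.prod_mul_distrib, Finset.prod_const, (Finset.mem_powersetCard.1 ht).2]

lemma lagEval_lagF (n : ℕ) :
    lagEval n (lagF (n + 1)) =
      ∑ S ∈ (Finset.univ : Finset (Fin n)).powerset.erase ∅,
        (C ((-1) ^ S.card) * ∏ i ∈ S, X i ^ 2) := by
  have h1 := prod_one_add_esymm n 1
  have h2 := prod_one_add_esymm n (-1)
  simp only [one_pow, one_mul] at h1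
  have : lagEval n (lagF (n + 1)) = (∏ i : Fin n, (1 + X i)) * (∏ i : Fin n, (1 + -1 * X i)) - 1 := by
    rw [h1, h2, lagF]
    simp only [map_sub, map_mul, map_add, map_one, map_sum, apply_ite (lagEval n), map_zero,
      map_pow, map_neg]
    simp only [lagEval, aeval_X]
  rw [this, ← Finset.prod_mul_distrib]
  have h3 : ∀ i : Fin n, (1 + X i) * (1 + -1 * X i) = (1 + -(X i ^ 2) : MvPolynomial (Fin n) ℚ) :=
    fun i => by ring
  simp only [h3]
  rw [Finset.prod_one_add, ← Finset.add_sum_erase _ _ (Finset.empty_mem_powerset _),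
    Finset.prod_empty, add_sub_cancel_left]
  refine Finset.sum_congr rfl fun S _ => ?_
  rw [Finset.prod_neg]
  simp

/-- The linear form `f ↦ [x^ρ] (f(e_1,…,e_n) · ∏_{i<j} (x_j - x_i))` vanishes on the ideal. -/
lemma coeff_eq_zero_of_mem (n : ℕ) (f : MvPolynomial (Fin (n + 1)) ℚ)
    (hf : f ∈ lagIdeal (n + 1)) : coeff (lagRho n) (lagEval n f * lagVdm n) = 0 := by
  have halt : ∀ a : MvPolynomial (Fin (n + 1)) ℚ, ∀ i j : Fin n, i ≠ j →
      rename (Equiv.swap i j) (lagEval n a * lagVdm n) = - (lagEval n a * lagVdm n) := by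
    intro a i j hij
    rw [map_mul, rename_lagEval, rename_lagVdm n hij, mul_neg]
  refine Submodule.span_induction
    (p := fun f _ => ∀ a, coeff (lagRho n) (lagEval n (a * f) * lagVdm n) = 0)
    ?_ ?_ ?_ ?_ hf 1 |> fun h => by simpa using h
  · rintro g (⟨k, -, rfl⟩ | ⟨i, hi, rfl⟩) a
    · rw [map_mul, lagEval_component, lagEval_lagF, map_sum, mul_comm (lagEval n a), mul_assoc,
        Finset.sum_mul, coeff_sum]
      refine Finset.sum_eq_zero fun S hS => ?_
      have hS' : S.Nonempty := Finset.nonempty_iff_ne_empty.2 (Finset.mem_erase.1 hS).1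
      have hhom : (C ((-1) ^ S.card) * ∏ i ∈ S, X i ^ 2 : MvPolynomial (Fin n) ℚ).IsHomogeneous
          (∑ i ∈ S, 2) := by
        refine IsHomogeneous.C_mul (IsHomogeneous.prod _ _ _ fun i _ => ?_) _
        simpa using (isHomogeneous_X ℚ i).pow 2
      rw [homogeneousComponent_of_mem hhom]
      split_ifs
      · rw [mul_assoc, coeff_C_mul, coeff_lagRho_eq_zero _ (halt a) S hS', mul_zero]
      · simp
    · have : lagEval n (X i) = 0 := by
        rw [lagEval, aeval_X]
        have : (i : ℕ) + 1 = n + 1 := by omega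
        rw [this, esymm, Finset.powersetCard_eq_empty.2 (by simp), Finset.sum_empty]
      rw [map_mul, this]; simp
  · intro a; simp
  · intro x y _ _ hx hy a
    rw [mul_add, map_add, add_mul, coeff_add, hx, hy, add_zero]
  · intro b x _ hx a
    rw [smul_eq_mul, ← mul_assoc]; exact hx _

/-- The matrix `(1/(ρ_i - j)!)`, with `1/m! = 0` for `m < 0`, written as
`ρ_i (ρ_i - 1) ⋯ (ρ_i - j + 1) / ρ_i!`. -/
noncomputable def lagMat (n : ℕ) : Matrix (Fin n) (Fin n) ℚ :=
  Matrix.of fun i j =>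
    ((lagRho n i).factorial : ℚ)⁻¹ * ((lagRho n i).descFactorial (j : ℕ) : ℚ)

/-- Up to the factors `1/ρ_i!`, the determinant is the Vandermonde determinant of the distinct
numbers `ρ_i`, since falling factorials are monic polynomials. -/
lemma lagMat_det_ne_zero (n : ℕ) : (lagMat n).det ≠ 0 := by
  have h := Matrix.det_eval_matrixOfPolynomials_eq_det_vandermonde
    (fun i : Fin n => (lagRho n i : ℚ)) (fun i => descPochhammer ℚ i)
    (fun i => descPochhammer_natDegree ℚ i) (fun i => monic_descPochhammer ℚ i)
  simp only [descPochhammer_eval_eq_descFactorial] at h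
  have h2 := Matrix.det_mul_column (fun i : Fin n => ((lagRho n i).factorial : ℚ)⁻¹)
    (Matrix.of fun i j : Fin n => ((lagRho n i).descFactorial (j : ℕ) : ℚ))
  rw [← h] at h2
  simp only [Matrix.of_apply] at h2
  rw [lagMat, h2]
  refine mul_ne_zero (Finset.prod_ne_zero_iff.2 fun i _ => ?_) ?_
  · exact inv_ne_zero (by exact_mod_cast (Nat.factorial_ne_zero _))
  · refine Matrix.det_vandermonde_ne_zero_iff.2 fun i j hij => ?_
    have : 2 * (i : ℕ) + 1 = 2 * (j : ℕ) + 1 := by exact_mod_cast hij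
    exact Fin.ext (by omega)

/-- The contribution of a single term of the Vandermonde determinant. -/
lemma coeff_pow_mul_prod (n : ℕ) (σ : Equiv.Perm (Fin n)) :
    coeff (lagRho n) ((∑ i, X i : MvPolynomial (Fin n) ℚ) ^ ((n + 1) * n / 2) *
      ∏ i : Fin n, X (σ i) ^ (i : ℕ)) =
      (((n + 1) * n / 2).factorial : ℚ) * ∏ i, lagMat n (σ i) i := by
  set m : Fin n →₀ ℕ := Finsupp.equivFunOnFinite.symm fun j => ((σ.symm j : Fin n) : ℕ) with hm
  have hmσ : ∀ i, m (σ i) = i := by intro i; simp [hm]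
  have hmon : (∏ i : Fin n, X (σ i) ^ (i : ℕ) : MvPolynomial (Fin n) ℚ) = monomial m 1 := by
    rw [monomial_eq, map_one, one_mul, Finsupp.prod_fintype _ _ (by simp),
      ← Equiv.prod_comp σ fun j => X j ^ m j]
    simp only [hmσ]
  rw [hmon, coeff_mul_monomial', mul_one]
  split_ifs with hle
  · have hle' : ∀ i : Fin n, (i : ℕ) ≤ lagRho n (σ i) := fun i => by simpa only [hmσ] using hle (σ i)
    have hdeg : ∑ j, (lagRho n - m) j = (n + 1) * n / 2 := by
      have h1 : ∑ j, (lagRho n - m) j + ∑ j, m j = ∑ j, lagRho n j := by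
        rw [← Finset.sum_add_distrib]
        exact Finset.sum_congr rfl fun j _ => Nat.sub_add_cancel (hle j)
      have h2 : ∑ j, m j = ∑ i ∈ Finset.range n, i := by
        rw [← Equiv.sum_comp σ, Finset.sum_range]
        simp only [hmσ]
      have h3 : ∑ j, lagRho n j = 2 * (∑ i ∈ Finset.range n, i) + n := by
        rw [Finset.sum_range, Finset.mul_sum]
        simp [lagRho, Finset.sum_add_distrib]
      have h4 := Finset.sum_range_id (n + 1)
      rw [Finset.sum_range_succ, Nat.add_sub_cancel] at h4
      omega
    have hsum : (lagRho n - m).sum (fun _ a => a) = (n + 1) * n / 2 := by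
      rw [Finsupp.sum_fintype _ _ (by simp), hdeg]
    rw [coeff_sum_X_pow_of_fintype, if_pos hsum,
      Finsupp.multinomial_eq_of_support_subset (Finset.subset_univ _)]
    have hspec := Nat.multinomial_spec Finset.univ (lagRho n - m)
    rw [hdeg] at hspec
    rw [← hspec, ← Equiv.prod_comp σ]
    simp only [Finsupp.coe_tsub]
    push_cast
    rw [mul_right_comm, ← Finset.prod_mul_distrib, Finset.prod_eq_one, one_mul]
    intro i _
    have hfac := Nat.factorial_mul_descFactorial (hle' i)
    have hne : ((lagRho n (σ i)).factorial : ℚ) ≠ 0 := by exact_mod_cast Nat.factorial_ne_zero _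
    rw [lagMat, Matrix.of_apply, Pi.sub_apply, hmσ, mul_left_comm, ← Nat.cast_mul, hfac,
      inv_mul_cancel₀ hne]
  · obtain ⟨j, hj⟩ : ∃ j, lagRho n j < m j := by
      by_contra! h
      exact hle h
    obtain ⟨i, rfl⟩ := σ.surjective j
    rw [hmσ] at hj
    rw [Finset.prod_eq_zero (Finset.mem_univ i), mul_zero]
    rw [lagMat, Matrix.of_apply, Nat.descFactorial_eq_zero_iff_lt.2 hj, Nat.cast_zero, mul_zero]

/-- The value on `u_1^N` is `N! · det (1/(ρ_i - j)!)`. -/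
lemma coeff_pow_ne_zero (n : ℕ) :
    coeff (lagRho n) (lagEval n (X 0 ^ ((n + 1) * n / 2)) * lagVdm n) ≠ 0 := by
  have hX : lagEval n (X 0) = ∑ i, X i := by
    rw [lagEval, aeval_X, Fin.val_zero, zero_add, esymm_one]
  have hval : coeff (lagRho n) (lagEval n (X 0 ^ ((n + 1) * n / 2)) * lagVdm n) =
      (((n + 1) * n / 2).factorial : ℚ) * (lagMat n).det := by
    rw [map_pow, hX, lagVdm, Matrix.det_apply, Matrix.det_apply, Finset.mul_sum, Finset.mul_sum,
      coeff_sum]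
    refine Finset.sum_congr rfl fun σ _ => ?_
    simp only [Matrix.vandermonde_apply]
    rw [mul_smul_comm, mul_smul_comm, ← coeff_pow_mul_prod]
    rcases Int.units_eq_one_or (Equiv.Perm.sign σ) with h | h <;> simp [h]
  rw [hval]
  exact mul_ne_zero (by exact_mod_cast Nat.factorial_ne_zero _) (lagMat_det_ne_zero n)

/-! ### Conclusion -/

/-- In `R_d`, every homogeneous element of top degree `d(d-1)/2` is a rational
multiple of `u_1^{d(d-1)/2}`. -/
theorem lag_top_degree_multiple (d : ℕ) (hd : 0 < d) (P : MvPolynomial (Fin d) ℚ)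
    (hP : P.IsWeightedHomogeneous (lagWeight d) (d * (d - 1) / 2)) :
    ∃ q : ℚ, Ideal.Quotient.mk (lagIdeal d) P =
      q • Ideal.Quotient.mk (lagIdeal d)
        ((MvPolynomial.X (⟨0, hd⟩ : Fin d)) ^ (d * (d - 1) / 2)) := by
  obtain ⟨n, rfl⟩ : ∃ n, d = n + 1 := ⟨d - 1, by omega⟩
  rw [Nat.add_sub_cancel] at hP ⊢
  change ∃ q : ℚ, _ = q • Ideal.Quotient.mk _ ((X (0 : Fin (n + 1))) ^ _)
  have hXh : ((X (0 : Fin (n + 1)) : MvPolynomial (Fin (n + 1)) ℚ) ^ ((n + 1) * n / 2)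
      ).IsWeightedHomogeneous (lagWeight (n + 1)) ((n + 1) * n / 2) := by
    have := (isWeightedHomogeneous_X ℚ (lagWeight (n + 1)) 0).pow ((n + 1) * n / 2)
    simpa [lagWeight] using this
  obtain ⟨c, hc⟩ := lag_top_mem n P hP
  obtain ⟨c₀, hc₀⟩ := lag_top_mem n _ hXh
  have hne : c₀ ≠ 0 := by
    rintro rfl
    rw [zero_smul, sub_zero] at hc₀
    exact coeff_pow_ne_zero n (coeff_eq_zero_of_mem n _ hc₀)
  refine ⟨c / c₀, ?_⟩
  have hsm : ∀ (q : ℚ) f, q • Ideal.Quotient.mk (lagIdeal (n + 1)) f =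
      Ideal.Quotient.mk (lagIdeal (n + 1)) (q • f) := fun q f => rfl
  rw [hsm, Ideal.Quotient.mk_eq_mk_iff_sub_mem]
  have h := (lagIdeal (n + 1)).sub_mem hc
    (Ideal.mul_mem_left _ (C (c / c₀)) hc₀)
  rw [← smul_eq_C_mul, smul_sub, smul_smul, div_mul_cancel₀ _ hne] at h
  rwa [sub_sub_sub_cancel_right] at h
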